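/- Proposition (maximal regret scenario for R-RSP): for every β ∈ ℤ, every path p ∈ P(β), and every scenario c, the β-restricted regret of p in c is at most the β-restricted regret of p in the induced scenario s(p); that is, C_p^c − min_{q∈P(β)} C_q^c ≤ C_p^{s(p)} − min_{q∈P(β)} C_q^{s(p)}. -/

import Mathlib

open Finset

/-- The arcs of a walk described by its list of vertices: consecutive pairs. -/
def walkArcs {V : Type*} (vs : List V) : List (V × V) := vs.zip vs.tail

/-- `IsPath A o t vs` : `vs` describes a directed walk from `o` to `t` whose arcs all belong to
`A` and are pairwise distinct. -/
def IsPath {V : Type*} (A : Finset (V × V)) (o t : V) (vs : List V) : Prop :=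
  vs.head? = some o ∧ vs.getLast? = some t ∧
    (∀ a ∈ walkArcs vs, a ∈ A) ∧ (walkArcs vs).Nodup

/-- The set `A[p]` of arcs of a path. -/
def arcSet {V : Type*} [DecidableEq V] (vs : List V) : Finset (V × V) :=
  (walkArcs vs).toFinset

/-!
Passing from `c` to the scenario induced by `S` can only increase the excess cost of `S` over any
competitor `T`: the common elements cancel, every element of `S \ T` becomes as expensive as
possible and every element of `T \ S` as cheap as possible. The regret of `S` is the supremum of
these excess costs over the feasible `T`. Paths matter only through their arc sets, so the
argument works for any family of finite sets.
-/

section InducedScenario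

variable {α R : Type*} [DecidableEq α]

/-- The scenario induced by `S` for the cost intervals `[l a, u a]`: upper costs on `S`, lower
costs elsewhere. -/
def inducedScenario (l u : α → R) (S : Finset α) : α → R := S.piecewise u l

theorem le_inducedScenario [Preorder R] {l u : α → R} (hlu : l ≤ u) (S : Finset α) :
    l ≤ inducedScenario l u S :=
  S.le_piecewise_of_le_of_le hlu le_rfl

end InducedScenario

section TotalCost

variable {α R : Type*} [AddCommMonoid R]

/-- The cost of the finite set `S` in the scenario `c`. -/
def totalCost (c : α → R) (S : Finset α) : R := ∑ a ∈ S, c a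

theorem totalCost_inducedScenario_self [DecidableEq α] (l u : α → R) (S : Finset α) :
    totalCost (inducedScenario l u S) S = totalCost u S :=
  sum_congr rfl fun _ ha => piecewise_eq_of_mem _ _ _ ha

variable [PartialOrder R] [IsOrderedAddMonoid R]

theorem totalCost_mono {c c' : α → R} (h : c ≤ c') (S : Finset α) :
    totalCost c S ≤ totalCost c' S :=
  sum_le_sum fun a _ => h a

theorem bddBelow_totalCost_image_of_nonneg {c : α → R} (hc : 0 ≤ c) (F : Set (Finset α)) :
    BddBelow (totalCost c '' F) :=
  ⟨0, Set.forall_mem_image.2 fun _ _ => sum_nonneg fun a _ => hc a⟩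

theorem bddBelow_totalCost_image_mono {c c' : α → R} (h : c ≤ c') {F : Set (Finset α)}
    (hc : BddBelow (totalCost c '' F)) : BddBelow (totalCost c' '' F) :=
  let ⟨b, hb⟩ := hc
  ⟨b, Set.forall_mem_image.2 fun T hT =>
    (hb (Set.mem_image_of_mem _ hT)).trans (totalCost_mono h T)⟩

end TotalCost

section ExcessCost

variable {α R : Type*} [AddCommGroup R] [PartialOrder R] [IsOrderedAddMonoid R] [DecidableEq α]

theorem totalCost_sub_totalCost_le {c c' : α → R} {S T : Finset α}
    (hS : ∀ a ∈ S \ T, c a ≤ c' a) (hT : ∀ a ∈ T \ S, c' a ≤ c a) :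
    totalCost c S - totalCost c T ≤ totalCost c' S - totalCost c' T :=
  calc totalCost c S - totalCost c T
      = ∑ a ∈ S \ T, c a - ∑ a ∈ T \ S, c a := sum_sdiff_sub_sum_sdiff.symm
    _ ≤ ∑ a ∈ S \ T, c' a - ∑ a ∈ T \ S, c' a := sub_le_sub (sum_le_sum hS) (sum_le_sum hT)
    _ = totalCost c' S - totalCost c' T := sum_sdiff_sub_sum_sdiff

theorem totalCost_sub_totalCost_le_inducedScenario {l u c : α → R} (hlc : l ≤ c) (hcu : c ≤ u)
    (S T : Finset α) :
    totalCost c S - totalCost c T ≤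
      totalCost (inducedScenario l u S) S - totalCost (inducedScenario l u S) T := by
  apply totalCost_sub_totalCost_le
  · intro a ha
    simpa only [inducedScenario, piecewise_eq_of_mem _ _ _ (mem_sdiff.1 ha).1] using hcu a
  · intro a ha
    simpa only [inducedScenario, piecewise_eq_of_notMem _ _ _ (mem_sdiff.1 ha).2] using hlc a

end ExcessCost

section Regret

variable {α R : Type*} [AddCommGroup R]

/-- The regret of `S` in the scenario `c`, relative to the family `F` of feasible sets; `S` itself
need not belong to `F`. The infimum is meaningful only if `F` is nonempty and the costs of its
members are bounded below. -/
def regret [InfSet R] (F : Set (Finset α)) (c : α → R) (S : Finset α) : R :=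
  totalCost c S - sInf (totalCost c '' F)

theorem regret_image_eq_sum_sub_sInf [InfSet R] {ι : Type*} (f : ι → Finset α) (P : Set ι)
    (c : α → R) (S : Finset α) :
    regret (f '' P) c S = ∑ a ∈ S, c a - sInf {v | ∃ q ∈ P, v = ∑ a ∈ f q, c a} := by
  rw [regret, Set.image_image]
  simp only [totalCost, Set.image, eq_comm]

theorem regret_image_inducedScenario_self [InfSet R] [DecidableEq α] {ι : Type*}
    (f : ι → Finset α) (P : Set ι) (l u : α → R) (S : Finset α) :
    regret (f '' P) (inducedScenario l u S) S =
      ∑ a ∈ S, u a - sInf {v | ∃ q ∈ P, v = ∑ a ∈ f q, if a ∈ S then u a else l a} := by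
  rw [regret_image_eq_sum_sub_sInf]
  exact congrArg (· - _) (totalCost_inducedScenario_self l u S)

variable [ConditionallyCompleteLattice R] [IsOrderedAddMonoid R]
  {F : Set (Finset α)} {c : α → R}

theorem regret_le (hF : F.Nonempty) {S : Finset α} {r : R}
    (h : ∀ T ∈ F, totalCost c S - totalCost c T ≤ r) : regret F c S ≤ r :=
  sub_le_comm.1 <| le_csInf (hF.image _) <| Set.forall_mem_image.2 fun T hT =>
    sub_le_comm.1 (h T hT)

theorem totalCost_sub_totalCost_le_regret (hF : BddBelow (totalCost c '' F)) (S : Finset α)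
    {T : Finset α} (hT : T ∈ F) : totalCost c S - totalCost c T ≤ regret F c S :=
  sub_le_sub_left (csInf_le hF (Set.mem_image_of_mem _ hT)) _

theorem rrsp_regret_le_regret_induced_scenario_general [DecidableEq α] {l u : α → R}
    (hF : F.Nonempty) (hbdd : BddBelow (totalCost l '' F)) (hlc : l ≤ c) (hcu : c ≤ u)
    (S : Finset α) : regret F c S ≤ regret F (inducedScenario l u S) S := by
  have hbdd_induced : BddBelow (totalCost (inducedScenario l u S) '' F) :=
    bddBelow_totalCost_image_mono (le_inducedScenario (hlc.trans hcu) S) hbdd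
  exact regret_le hF fun T hT =>
    (totalCost_sub_totalCost_le_inducedScenario hlc hcu S T).trans
      (totalCost_sub_totalCost_le_regret hbdd_induced S hT)

end Regret

/-- maximal regret scenario for R-RSP: for every `β`, every path `p ∈ P(β)` and
every scenario `c`, the β-restricted regret of `p` in `c` is at most its β-restricted regret in
the scenario `s(p)` induced by `p` (cost `u` on arcs of `p`, cost `l` elsewhere). -/
theorem rrsp_regret_le_regret_induced_scenario
    {V : Type*} [Fintype V] [DecidableEq V]
    (A : Finset (V × V)) (o t : V)
    (l u : V × V → ℕ) (hlu : ∀ a, l a ≤ u a) (d : V × V → ℕ) (β : ℤ)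
    (P : Set (List V))
    (hP : P = {q : List V | IsPath A o t q ∧ (∑ a ∈ arcSet q, (d a : ℤ)) ≤ β})
    (hPne : P.Nonempty)
    (p : List V) (hp : p ∈ P)
    (c : V × V → ℝ) (hc : ∀ a, (l a : ℝ) ≤ c a ∧ c a ≤ u a) :
    (∑ a ∈ arcSet p, c a) - sInf {v : ℝ | ∃ q ∈ P, v = ∑ a ∈ arcSet q, c a} ≤
      (∑ a ∈ arcSet p, (u a : ℝ)) -
        sInf {v : ℝ | ∃ q ∈ P,
          v = ∑ a ∈ arcSet q, (if a ∈ arcSet p then (u a : ℝ) else (l a : ℝ))} := by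
  have hl : BddBelow (totalCost (fun a => (l a : ℝ)) '' (arcSet '' P)) :=
    bddBelow_totalCost_image_of_nonneg (fun a => (l a).cast_nonneg) _
  have h := rrsp_regret_le_regret_induced_scenario_general (hPne.image arcSet) hl
    (fun a => (hc a).1) (fun a => (hc a).2) (arcSet p)
  rwa [regret_image_inducedScenario_self, regret_image_eq_sum_sub_sInf] at h
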